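/- arXiv:1604.06315 — 2 statements merged into one kernel-verified Lean document; each statement's English description precedes it below -/
import Mathlib

section
/- Let ψ : M² → L⁴ be a spacelike immersion through the lightcone Λ. If the time-coordinate function ψ₀ = x₀∘ψ attains a local maximum at p₀ ∈ M², then II_η is positive definite at p₀ (and in a neighborhood of p₀). In particular, if M² is compact and η is non-degenerate, then II_η is a Riemannian metric on all of M². -/
/-- The Lorentz–Minkowski inner product on `ℝ⁴`, signature `(-,+,+,+)`. -/
def mink (u v : Fin 4 → ℝ) : ℝ := -(u 0 * v 0) + u 1 * v 1 + u 2 * v 2 + u 3 * v 3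

/-! Let `e` be the timelike vector whose height function `-⟨e, ψ⟩` is the time coordinate. The
lightlike fields `ψ`, `η` and the tangent space of the surface span the ambient space, so at a
critical point of the height, where `e` is normal, `e = ⟨η, e⟩ ψ + ⟨ψ, e⟩ η`. Pairing this with the
second derivative of `ψ`, and using `⟨ψ, D²ψ(v, v)⟩ = -⟨dψ v, dψ v⟩` and
`⟨η, D²ψ(v, v)⟩ = -II_η(v, v)`, gives
`⟨e, D²ψ(v, v)⟩ = -⟨η, e⟩ ⟨dψ v, dψ v⟩ - ⟨ψ, e⟩ II_η(v, v)`.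
At a local maximum of the height the left side is nonnegative, while `⟨ψ, e⟩ < 0 < ⟨η, e⟩` because
`⟨e, e⟩ = 2 ⟨η, e⟩ ⟨ψ, e⟩ < 0`; hence `II_η(v, v) > 0`.

Globally, positive definite forms are open among all forms and closed among nondegenerate ones, so
on a connected surface positivity at one point propagates to every point.
-/

open Filter Module Topology

section SecondDerivative

theorem deriv_deriv_nonpos_of_isLocalMax {f : ℝ → ℝ} {t : ℝ} (hf : ContinuousAt f t)
    (hmax : IsLocalMax f t) : deriv (deriv f) t ≤ 0 := by
  by_contra! hpos
  have hmin : IsLocalMin f t := isLocalMin_of_deriv_deriv_pos hpos hmax.deriv_eq_zero hf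
  have hconst : f =ᶠ[𝓝 t] fun _ => f t := by
    filter_upwards [hmax, hmin] with s hle hge using le_antisymm hle hge
  have hzero : deriv (deriv f) t = 0 := by simpa using hconst.deriv.deriv_eq
  exact hpos.ne' hzero

variable {E F G H : Type*} [NormedAddCommGroup E] [NormedSpace ℝ E]
  [NormedAddCommGroup F] [NormedSpace ℝ F] [NormedAddCommGroup G] [NormedSpace ℝ G]
  [NormedAddCommGroup H] [NormedSpace ℝ H]

theorem second_derivative_nonpos_of_isLocalMax {f : E → ℝ} {f' : E → E →L[ℝ] ℝ}
    {f'' : E →L[ℝ] E →L[ℝ] ℝ} {p : E} (hf : ∀ᶠ q in 𝓝 p, HasFDerivAt f (f' q) q)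
    (hf' : HasFDerivAt f' f'' p) (hmax : IsLocalMax f p) (v : E) : f'' v v ≤ 0 := by
  let line : ℝ → E := fun t => p + t • v
  have hline (t : ℝ) : HasDerivAt line v t := by
    simpa [line] using ((hasDerivAt_id t).smul_const v).const_add p
  have hline_zero : line 0 = p := by simp [line]
  have htendsto : Tendsto line (𝓝 0) (𝓝 p) := hline_zero ▸ (hline 0).continuousAt.tendsto
  have hderiv : ∀ᶠ t in 𝓝 (0 : ℝ), HasDerivAt (f ∘ line) (f' (line t) v) t :=
    (htendsto.eventually hf).mono fun t ht => ht.comp_hasDerivAt t (hline t)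
  have hderiv₂ : HasDerivAt (fun t => f' (line t) v) (f'' v v) 0 := by
    have hcomp := HasFDerivAt.comp_hasDerivAt (0 : ℝ) (hline_zero.symm ▸ hf') (hline 0)
    simpa using hcomp.clm_apply (hasDerivAt_const 0 v)
  have hmax_line : IsLocalMax (f ∘ line) 0 := by
    simpa [IsLocalMax, IsMaxFilter, hline_zero] using htendsto.eventually hmax
  have hderiv_eq : deriv (f ∘ line) =ᶠ[𝓝 0] fun t => f' (line t) v :=
    hderiv.mono fun t ht => ht.deriv
  calc f'' v v = deriv (deriv (f ∘ line)) 0 := by rw [hderiv_eq.deriv_eq, hderiv₂.deriv]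
    _ ≤ 0 := deriv_deriv_nonpos_of_isLocalMax hderiv.self_of_nhds.continuousAt hmax_line

theorem apply_second_derivative_nonpos_of_isLocalMax {ψ : E → F} {p : E} (hψ : ContDiffAt ℝ 2 ψ p)
    (φ : F →L[ℝ] ℝ) (hmax : IsLocalMax (fun q => φ (ψ q)) p) (v : E) :
    φ (fderiv ℝ (fderiv ℝ ψ) p v v) ≤ 0 := by
  have hfst : ∀ᶠ q in 𝓝 p, HasFDerivAt (fun q => φ (ψ q)) (φ ∘L fderiv ℝ ψ q) q := by
    filter_upwards [hψ.eventually (by simp)] with q hq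
    exact φ.hasFDerivAt.comp q (hq.differentiableAt (by simp)).hasFDerivAt
  have hdiff : DifferentiableAt ℝ (fderiv ℝ ψ) p :=
    (hψ.fderiv_right (m := 1) (by norm_num)).differentiableAt (by simp)
  have hsnd := (hasFDerivAt_const φ p).clm_comp hdiff.hasFDerivAt
  simpa using second_derivative_nonpos_of_isLocalMax hfst hsnd hmax v

theorem bilin_apply_fderiv_of_const (B : F →L[ℝ] G →L[ℝ] H) {f : E → F} {g : E → G} {c : H} {p : E}
    (hf : DifferentiableAt ℝ f p) (hg : DifferentiableAt ℝ g p) (hc : ∀ q, B (f q) (g q) = c)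
    (v : E) : B (f p) (fderiv ℝ g p v) = -B (fderiv ℝ f p v) (g p) := by
  have hzero : fderiv ℝ (fun q => B (f q) (g q)) p = 0 := by simp [hc]
  rw [B.fderiv_of_bilinear hf hg] at hzero
  exact eq_neg_of_add_eq_zero_left (by simpa using DFunLike.congr_fun hzero v)

theorem bilin_apply_second_derivative_of_orthogonal (B : F →L[ℝ] G →L[ℝ] H) {f : E → F} {ψ : E → G}
    {p : E} (hf : DifferentiableAt ℝ f p) (hψ : DifferentiableAt ℝ (fderiv ℝ ψ) p)
    (horth : ∀ q v, B (f q) (fderiv ℝ ψ q v) = 0) (u v : E) :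
    B (f p) (fderiv ℝ (fderiv ℝ ψ) p u v) = -B (fderiv ℝ f p u) (fderiv ℝ ψ p v) := by
  simpa [fderiv_clm_apply hψ (differentiableAt_const v)] using
    bilin_apply_fderiv_of_const B hf (hψ.clm_apply (differentiableAt_const v)) (horth · v) u

end SecondDerivative

section NullFrame

variable {K V W : Type*} [Field K] [AddCommGroup V] [Module K V] [FiniteDimensional K V]
  [AddCommGroup W] [Module K W] [FiniteDimensional K W]

theorem exists_eq_null_frame (B : LinearMap.BilinForm K V) (hB : B.IsSymm) {x n : V}
    {L : W →ₗ[K] V} (hdim : finrank K V = finrank K W + 2) (hx : B x x = 0) (hn : B n n = 0)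
    (hxn : B x n = 1) (hxL : ∀ w, B x (L w) = 0) (hnL : ∀ w, B n (L w) = 0)
    (hL : ∀ w, w ≠ 0 → B (L w) (L w) ≠ 0) (e : V) :
    ∃ w, e = B n e • x + B x e • n + L w := by
  let T : K × K × W →ₗ[K] V :=
    (LinearMap.toSpanSingleton K V x).coprod ((LinearMap.toSpanSingleton K V n).coprod L)
  have hT (a b : K) (w : W) : T (a, b, w) = a • x + b • n + L w := by simp [T, add_assoc]
  have hnx : B n x = 1 := hB.eq n x ▸ hxn
  have hBx (a b : K) (w : W) : B x (T (a, b, w)) = b := by simp [hT, hx, hxn, hxL]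
  have hBn (a b : K) (w : W) : B n (T (a, b, w)) = a := by simp [hT, hn, hnx, hnL]
  have hBL (a b : K) (w : W) : B (L w) (T (a, b, w)) = B (L w) (L w) := by
    simp [hT, hB.eq (L w) x, hB.eq (L w) n, hxL, hnL]
  have hinj : Function.Injective T := by
    refine (injective_iff_map_eq_zero T).mpr fun ⟨a, b, w⟩ hzero => ?_
    have ha : a = 0 := by simpa [hzero] using (hBn a b w).symm
    have hb : b = 0 := by simpa [hzero] using (hBx a b w).symm
    have hw : w = 0 := by
      by_contra hne
      exact hL w hne (by simpa [hzero] using (hBL a b w).symm)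
    simp [ha, hb, hw]
  have hsurj : Function.Surjective T :=
    (LinearMap.injective_iff_surjective_of_finrank_eq_finrank
      (by simp only [finrank_prod, finrank_self, hdim]; ring)).mp hinj
  obtain ⟨⟨a, b, w⟩, rfl⟩ := hsurj e
  exact ⟨w, by rw [hBx, hBn, hT]⟩

theorem eq_null_frame_of_orthogonal (B : LinearMap.BilinForm K V) (hB : B.IsSymm) {x n : V}
    {L : W →ₗ[K] V} (hdim : finrank K V = finrank K W + 2) (hx : B x x = 0) (hn : B n n = 0)
    (hxn : B x n = 1) (hxL : ∀ w, B x (L w) = 0) (hnL : ∀ w, B n (L w) = 0)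
    (hL : ∀ w, w ≠ 0 → B (L w) (L w) ≠ 0) {e : V} (he : ∀ w, B e (L w) = 0) :
    e = B n e • x + B x e • n := by
  obtain ⟨w, hw⟩ := exists_eq_null_frame B hB hdim hx hn hxn hxL hnL hL e
  have hLw : B (L w) (L w) = 0 := by
    have hpair := congrArg (B · (L w)) hw
    simpa [he, hxL, hnL] using hpair.symm
  have hw_zero : w = 0 := by
    by_contra hne
    exact hL w hne hLw
  simpa [hw_zero] using hw

end NullFrame

section PositiveDefinite

variable {X E : Type*} [TopologicalSpace X] [NormedAddCommGroup E] [NormedSpace ℝ E]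

theorem isOpen_setOf_forall_apply_self_pos [FiniteDimensional ℝ E] :
    IsOpen {b : E →L[ℝ] E →L[ℝ] ℝ | ∀ v, v ≠ 0 → 0 < b v v} := by
  have hsphere : {b : E →L[ℝ] E →L[ℝ] ℝ | ∀ v, v ≠ 0 → 0 < b v v} =
      {b | ∀ v ∈ Metric.sphere (0 : E) 1, 0 < b v v} := by
    ext b
    refine ⟨fun hb v hv => hb v (ne_zero_of_mem_unit_sphere ⟨v, hv⟩), fun hb v hv => ?_⟩
    have hunit : 0 < b (‖v‖⁻¹ • v) (‖v‖⁻¹ • v) := hb _ (by simp [norm_smul, hv])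
    have hscale : b v v = ‖v‖ ^ 2 * b (‖v‖⁻¹ • v) (‖v‖⁻¹ • v) := by
      have hnorm : ‖v‖ ≠ 0 := norm_ne_zero_iff.mpr hv
      simp only [map_smul, smul_apply, smul_eq_mul]
      field_simp
    rw [hscale]
    positivity
  rw [hsphere, isOpen_iff_mem_nhds]
  intro b hb
  refine (isCompact_sphere (0 : E) 1).eventually_forall_of_forall_eventually fun v hv => ?_
  have hcont : Continuous fun z : (E →L[ℝ] E →L[ℝ] ℝ) × E => z.1 z.2 z.2 := by fun_prop
  exact hcont.continuousAt.eventually (lt_mem_nhds (hb v hv))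

theorem isClosed_setOf_forall_apply_self_nonneg :
    IsClosed {b : E →L[ℝ] E →L[ℝ] ℝ | ∀ v, 0 ≤ b v v} := by
  simp only [Set.ofPred_forall]
  exact isClosed_iInter fun v => isClosed_le continuous_const (by fun_prop)

theorem forall_apply_self_pos_of_nondegenerate [FiniteDimensional ℝ E] [PreconnectedSpace X]
    {b : X → E →L[ℝ] E →L[ℝ] ℝ} (hb : Continuous b) (hsymm : ∀ x, (b x).toBilinForm.IsSymm)
    (hnondeg : ∀ x, (b x).toBilinForm.Nondegenerate) {x₀ : X}
    (hx₀ : ∀ v, v ≠ 0 → 0 < b x₀ v v) (x : X) : ∀ v, v ≠ 0 → 0 < b x v v := by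
  have hopen : IsOpen {x | ∀ v, v ≠ 0 → 0 < b x v v} :=
    isOpen_setOf_forall_apply_self_pos.preimage hb
  have hclosed : IsClosed {x | ∀ v, v ≠ 0 → 0 < b x v v} := by
    have heq : {x | ∀ v, v ≠ 0 → 0 < b x v v} = {x | ∀ v, 0 ≤ b x v v} := by
      ext x
      refine ⟨fun hpos v => ?_, fun hnonneg =>
        ((b x).toBilinForm.nondegenerate_iff' hnonneg
          (LinearMap.BilinForm.isSymm_iff.mp (hsymm x))).mp (hnondeg x)⟩
      rcases eq_or_ne v 0 with rfl | hv
      · simp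
      · exact (hpos v hv).le
    exact heq ▸ isClosed_setOf_forall_apply_self_nonneg.preimage hb
  exact Set.eq_univ_iff_forall.mp (IsClopen.eq_univ ⟨hclosed, hopen⟩ ⟨x₀, hx₀⟩) x

end PositiveDefinite

section NullCone

variable {E V : Type*} [NormedAddCommGroup E] [NormedSpace ℝ E]
  [NormedAddCommGroup V] [NormedSpace ℝ V]

/-- A spacelike immersion `ψ` through the null cone of `B`, together with its lightlike normal field
`η`, normalised by `⟨ψ, η⟩ = 1`. -/
structure IsNullConeImmersion (B : V →L[ℝ] V →L[ℝ] ℝ) (ψ η : E → V) : Prop where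
  contDiff : ContDiff ℝ 2 ψ
  contDiff_normal : ContDiff ℝ 1 η
  null (p : E) : B (ψ p) (ψ p) = 0
  spacelike (p v : E) : v ≠ 0 → 0 < B (fderiv ℝ ψ p v) (fderiv ℝ ψ p v)
  normal_null (p : E) : B (η p) (η p) = 0
  apply_normal (p : E) : B (ψ p) (η p) = 1
  normal_orthogonal (p v : E) : B (η p) (fderiv ℝ ψ p v) = 0

/-- The second fundamental form `II_η` of `ψ` in the normal direction `η`. It is written
`⟨dη u, dψ v⟩`, which equals `-⟨dψ (A_η u), dψ v⟩` by the Weingarten equation `dη = -dψ ∘ A_η`. -/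
noncomputable def secondFundamentalForm (B : V →L[ℝ] V →L[ℝ] ℝ) (ψ η : E → V) (p : E) :
    E →L[ℝ] E →L[ℝ] ℝ :=
  B.bilinearComp (fderiv ℝ η p) (fderiv ℝ ψ p)

namespace IsNullConeImmersion

variable {B : V →L[ℝ] V →L[ℝ] ℝ} {ψ η : E → V}

theorem differentiable_fderiv (h : IsNullConeImmersion B ψ η) : Differentiable ℝ (fderiv ℝ ψ) :=
  (h.contDiff.fderiv_right (m := 1) (by norm_num)).differentiable (by simp)

theorem position_orthogonal (h : IsNullConeImmersion B ψ η) (hB : B.toBilinForm.IsSymm) (p v : E) :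
    B (ψ p) (fderiv ℝ ψ p v) = 0 := by
  have hψ : DifferentiableAt ℝ ψ p := h.contDiff.differentiable (by simp) p
  have hneg := bilin_apply_fderiv_of_const B hψ hψ h.null v
  have hswap : B (fderiv ℝ ψ p v) (ψ p) = B (ψ p) (fderiv ℝ ψ p v) := hB.eq _ _
  linarith

theorem position_apply_second_derivative (h : IsNullConeImmersion B ψ η)
    (hB : B.toBilinForm.IsSymm) (p u v : E) :
    B (ψ p) (fderiv ℝ (fderiv ℝ ψ) p u v) = -B (fderiv ℝ ψ p u) (fderiv ℝ ψ p v) :=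
  bilin_apply_second_derivative_of_orthogonal B (h.contDiff.differentiable (by simp) p)
    (h.differentiable_fderiv p) (h.position_orthogonal hB) u v

theorem normal_apply_second_derivative (h : IsNullConeImmersion B ψ η) (p u v : E) :
    B (η p) (fderiv ℝ (fderiv ℝ ψ) p u v) = -secondFundamentalForm B ψ η p u v :=
  bilin_apply_second_derivative_of_orthogonal B (h.contDiff_normal.differentiable (by simp) p)
    (h.differentiable_fderiv p) h.normal_orthogonal u v

theorem secondFundamentalForm_isSymm (h : IsNullConeImmersion B ψ η) (p : E) :
    (secondFundamentalForm B ψ η p).toBilinForm.IsSymm where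
  eq u v := by
    have hsymm : IsSymmSndFDerivAt ℝ ψ p := h.contDiff.contDiffAt.isSymmSndFDerivAt (by simp)
    have hnormal := congrArg (B (η p)) (hsymm u v)
    rw [h.normal_apply_second_derivative, h.normal_apply_second_derivative] at hnormal
    exact neg_injective hnormal

theorem continuous_secondFundamentalForm (h : IsNullConeImmersion B ψ η) :
    Continuous (secondFundamentalForm B ψ η) := by
  have hψ : Continuous (fderiv ℝ ψ) := h.contDiff.continuous_fderiv (by simp)
  have hη : Continuous (fderiv ℝ η) := h.contDiff_normal.continuous_fderiv (by simp)
  exact (ContinuousLinearMap.flipₗᵢ ℝ E E ℝ).continuous.comp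
    (((ContinuousLinearMap.flipₗᵢ ℝ E V ℝ).continuous.comp
      (continuous_const.clm_comp hη)).clm_comp hψ)

theorem secondFundamentalForm_nondegenerate [FiniteDimensional ℝ E]
    (h : IsNullConeImmersion B ψ η) {p : E} {A : E →ₗ[ℝ] E}
    (hWein : ∀ v, fderiv ℝ η p v = -fderiv ℝ ψ p (A v)) (hA : LinearMap.det A ≠ 0) :
    (secondFundamentalForm B ψ η p).toBilinForm.Nondegenerate := by
  have hsymm := LinearMap.BilinForm.isSymm_iff.mp (h.secondFundamentalForm_isSymm p)
  have hinj : LinearMap.ker A = ⊥ := by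
    contrapose! hA
    exact LinearMap.det_eq_zero_iff_ker_ne_bot.mpr hA
  refine hsymm.isRefl.nondegenerate_iff_separatingLeft.mpr fun u hu => ?_
  refine LinearMap.ker_eq_bot'.mp hinj u ?_
  by_contra hAu
  have hself : B (fderiv ℝ ψ p (A u)) (fderiv ℝ ψ p (A u)) = 0 := by
    simpa [secondFundamentalForm, hWein] using hu (A u)
  exact (h.spacelike p (A u) hAu).ne' hself

theorem eq_null_frame_of_isNormal [FiniteDimensional ℝ E] [FiniteDimensional ℝ V]
    (h : IsNullConeImmersion B ψ η) (hB : B.toBilinForm.IsSymm)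
    (hdim : finrank ℝ V = finrank ℝ E + 2) {e : V} {p : E}
    (he : ∀ w, B e (fderiv ℝ ψ p w) = 0) :
    e = B (η p) e • ψ p + B (ψ p) e • η p :=
  eq_null_frame_of_orthogonal B.toBilinForm hB (L := (fderiv ℝ ψ p).toLinearMap) hdim (h.null p)
    (h.normal_null p) (h.apply_normal p) (h.position_orthogonal hB p) (h.normal_orthogonal p)
    (fun w hw => (h.spacelike p w hw).ne') he

theorem secondFundamentalForm_pos_of_isLocalMax [FiniteDimensional ℝ E] [FiniteDimensional ℝ V]
    (h : IsNullConeImmersion B ψ η) (hB : B.toBilinForm.IsSymm)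
    (hdim : finrank ℝ V = finrank ℝ E + 2) {e : V} (he : B e e < 0) {p : E}
    (hfuture : B e (ψ p) < 0) (hmax : IsLocalMax (fun q => -B e (ψ q)) p) (v : E) (hv : v ≠ 0) :
    0 < secondFundamentalForm B ψ η p v v := by
  have hψ : HasFDerivAt ψ (fderiv ℝ ψ p) p := (h.contDiff.differentiable (by simp) p).hasFDerivAt
  have hcrit (w : E) : B e (fderiv ℝ ψ p w) = 0 := by
    have hzero := hmax.hasFDerivAt_eq_zero ((-B e).hasFDerivAt.comp p hψ)
    simpa using DFunLike.congr_fun hzero w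
  have hhess : 0 ≤ B e (fderiv ℝ (fderiv ℝ ψ) p v v) := by
    simpa using apply_second_derivative_nonpos_of_isLocalMax h.contDiff.contDiffAt (-B e) hmax v
  have hframe : e = B (η p) e • ψ p + B (ψ p) e • η p := h.eq_null_frame_of_isNormal hB hdim hcrit
  have hframe_apply (u : V) : B e u = B (η p) e * B (ψ p) u + B (ψ p) e * B (η p) u := by
    simpa using congrArg (B · u) hframe
  have hψe : B (ψ p) e < 0 := (hB.eq (ψ p) e).trans_lt hfuture
  have hηe : 0 < B (η p) e := by
    have hself := hframe_apply e
    exact pos_of_mul_neg_left (b := B (ψ p) e) (by linarith) hψe.le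
  have hkey : B e (fderiv ℝ (fderiv ℝ ψ) p v v) =
      -(B (η p) e * B (fderiv ℝ ψ p v) (fderiv ℝ ψ p v)) -
        B (ψ p) e * secondFundamentalForm B ψ η p v v := by
    rw [hframe_apply, h.position_apply_second_derivative hB, h.normal_apply_second_derivative]
    ring
  have hmetric : 0 < B (η p) e * B (fderiv ℝ ψ p v) (fderiv ℝ ψ p v) :=
    mul_pos hηe (h.spacelike p v hv)
  exact pos_of_mul_neg_right (a := B (ψ p) e) (by linarith) hψe.le

end IsNullConeImmersion

end NullCone

/-- The Lorentz–Minkowski inner product `mink` as a continuous bilinear form, to which the results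
for general forms apply. -/
noncomputable def minkowskiForm : (Fin 4 → ℝ) →L[ℝ] (Fin 4 → ℝ) →L[ℝ] ℝ :=
  (LinearMap.mk₂ ℝ mink (fun u v w => by simp only [mink, Pi.add_apply]; ring)
    (fun c u v => by simp only [mink, Pi.smul_apply, smul_eq_mul]; ring)
    (fun u v w => by simp only [mink, Pi.add_apply]; ring)
    (fun c u v => by simp only [mink, Pi.smul_apply, smul_eq_mul]; ring)).toContinuousBilinearMap

theorem minkowskiForm_apply (u v : Fin 4 → ℝ) : minkowskiForm u v = mink u v := rfl

theorem minkowskiForm_isSymm : minkowskiForm.toBilinForm.IsSymm where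
  eq u v := show mink u v = mink v u by simp only [mink]; ring

theorem minkowskiForm_single_zero_apply (u : Fin 4 → ℝ) :
    minkowskiForm (Pi.single 0 1) u = -u 0 := by
  simp [minkowskiForm_apply, mink]

theorem stmt15_general {E V : Type*} [NormedAddCommGroup E] [NormedSpace ℝ E]
    [FiniteDimensional ℝ E] [NormedAddCommGroup V] [NormedSpace ℝ V] [FiniteDimensional ℝ V]
    {B : V →L[ℝ] V →L[ℝ] ℝ} (hB : B.toBilinForm.IsSymm) (hdim : finrank ℝ V = finrank ℝ E + 2)
    {e : V} (he : B e e < 0) {ψ η : E → V} (h : IsNullConeImmersion B ψ η)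
    (hfuture : ∀ p, B e (ψ p) < 0) {A : E → E →ₗ[ℝ] E}
    (hWein : ∀ p v, fderiv ℝ η p v = -fderiv ℝ ψ p (A p v)) :
    (∀ p₀, IsLocalMax (fun q => -B e (ψ q)) p₀ →
      ∀ᶠ p in 𝓝 p₀, ∀ v, v ≠ 0 → 0 < secondFundamentalForm B ψ η p v v) ∧
    ((∃ p₀, IsLocalMax (fun q => -B e (ψ q)) p₀) → (∀ p, LinearMap.det (A p) ≠ 0) →
      ∀ p v, v ≠ 0 → 0 < secondFundamentalForm B ψ η p v v) := by
  have hpos (p₀ : E) (hmax : IsLocalMax (fun q => -B e (ψ q)) p₀) :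
      ∀ v, v ≠ 0 → 0 < secondFundamentalForm B ψ η p₀ v v :=
    h.secondFundamentalForm_pos_of_isLocalMax hB hdim he (hfuture p₀) hmax
  refine ⟨fun p₀ hmax => ?_, fun ⟨p₀, hmax⟩ hdet => ?_⟩
  · exact h.continuous_secondFundamentalForm.continuousAt.eventually
      (isOpen_setOf_forall_apply_self_pos.mem_nhds (hpos p₀ hmax))
  · exact forall_apply_self_pos_of_nondegenerate h.continuous_secondFundamentalForm
      h.secondFundamentalForm_isSymm
      (fun p => h.secondFundamentalForm_nondegenerate (hWein p) (hdet p)) (hpos p₀ hmax)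

/-- Let `ψ` be a spacelike immersion through the lightcone `Λ`, with lightlike
normal `η`, `⟨ψ,η⟩ = 1`, and Weingarten field `A = A_η`; `II_η(u,v) = -⟨dψ(A u), dψ(v)⟩`.
If the time-coordinate `ψ₀` attains a local maximum at `p₀`, then `II_η` is positive
definite at `p₀` and in a neighborhood of `p₀`. In particular, if `ψ₀` attains a (global)
maximum (as happens when the surface is compact) and `η` is non-degenerate
(`det A ≠ 0` everywhere), then `II_η` is positive definite everywhere, i.e. Riemannian. -/
theorem stmt15
    (ψ η : ℝ × ℝ → Fin 4 → ℝ)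
    (A : ℝ × ℝ → (ℝ × ℝ →ₗ[ℝ] ℝ × ℝ))
    (hψ : ContDiff ℝ (⊤ : ℕ∞) ψ) (hη : ContDiff ℝ (⊤ : ℕ∞) η)
    (hcone : ∀ p, mink (ψ p) (ψ p) = 0 ∧ 0 < ψ p 0)
    (hspace : ∀ p v, v ≠ 0 → 0 < mink (fderiv ℝ ψ p v) (fderiv ℝ ψ p v))
    (hηlight : ∀ p, mink (η p) (η p) = 0)
    (hψη : ∀ p, mink (ψ p) (η p) = 1)
    (hηnormal : ∀ p v, mink (η p) (fderiv ℝ ψ p v) = 0)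
    (hWein : ∀ p v, fderiv ℝ η p v = -(fderiv ℝ ψ p (A p v)))
    (II : ℝ × ℝ → (ℝ × ℝ) → (ℝ × ℝ) → ℝ)
    (hII : ∀ p u v, II p u v = -(mink (fderiv ℝ ψ p (A p u)) (fderiv ℝ ψ p v))) :
    (∀ p₀ : ℝ × ℝ, IsLocalMax (fun q => ψ q 0) p₀ →
      ∀ᶠ p in nhds p₀, ∀ v, v ≠ 0 → 0 < II p v v) ∧
    ((∃ p₀, ∀ p, ψ p 0 ≤ ψ p₀ 0) → (∀ p, LinearMap.det (A p) ≠ 0) →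
      ∀ p v, v ≠ 0 → 0 < II p v v) := by
  have h : IsNullConeImmersion minkowskiForm ψ η :=
    ⟨contDiff_infty.mp hψ 2, contDiff_infty.mp hη 1, fun p => (hcone p).1,
      hspace, hηlight, hψη, hηnormal⟩
  have hII_eq (p u v : ℝ × ℝ) : secondFundamentalForm minkowskiForm ψ η p u v = II p u v := by
    simp [secondFundamentalForm, hWein, hII, minkowskiForm_apply]
  have hgeneral := stmt15_general minkowskiForm_isSymm (by simp)
    (e := Pi.single 0 1) (by simp [minkowskiForm_single_zero_apply]) h
    (by simpa [minkowskiForm_single_zero_apply] using fun p => (hcone p).2) hWein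
  simp only [minkowskiForm_single_zero_apply, neg_neg, hII_eq] at hgeneral
  exact ⟨hgeneral.1, fun ⟨p₀, hmax⟩ => hgeneral.2 ⟨p₀, .of_forall hmax⟩⟩
end

section
/- Let ψ : M² → L⁴ be a spacelike immersion through the lightcone such that II_η is a Riemannian metric, K and K^η the Gauss curvatures of the induced metric and of II_η respectively, d = det(A_η), and L the difference tensor. Then 2K^η = K²/d + II_η(L,L) - (1/(4d²))·II_η(∇^{II_η}d, ∇^{II_η}d). -/
/-- Partial derivative in the first chart direction. -/
noncomputable def pd1 (f : ℝ × ℝ → ℝ) (p : ℝ × ℝ) : ℝ := fderiv ℝ f p (1, 0)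

/-- Partial derivative in the second chart direction. -/
noncomputable def pd2 (f : ℝ × ℝ → ℝ) (p : ℝ × ℝ) : ℝ := fderiv ℝ f p (0, 1)

/-- The Gauss curvature of the metric `E dx² + 2F dx dy + G dy²` via the Brioschi formula. -/
noncomputable def brioschi (E F G : ℝ × ℝ → ℝ) (p : ℝ × ℝ) : ℝ :=
  (Matrix.det !![-(1 / 2) * pd2 (pd2 E) p + pd1 (pd2 F) p - (1 / 2) * pd1 (pd1 G) p,
      (1 / 2) * pd1 E p, pd1 F p - (1 / 2) * pd2 E p;
      pd2 F p - (1 / 2) * pd1 G p, E p, F p;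
      (1 / 2) * pd2 G p, F p, G p] -
    Matrix.det !![0, (1 / 2) * pd2 E p, (1 / 2) * pd1 G p;
      (1 / 2) * pd2 E p, E p, F p;
      (1 / 2) * pd1 G p, F p, G p]) / (E p * G p - F p ^ 2) ^ 2

/-- `Γ` is the Levi-Civita connection (Christoffel field, in the chart) of the metric `G`. -/
def IsLeviCivita (G : ℝ × ℝ → (ℝ × ℝ) → (ℝ × ℝ) → ℝ)
    (Γ : ℝ × ℝ → (ℝ × ℝ) → (ℝ × ℝ) → ℝ × ℝ) : Prop :=
  (∀ p u v, Γ p u v = Γ p v u) ∧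
  (∀ p u v w, Γ p (u + v) w = Γ p u w + Γ p v w) ∧
  (∀ p (c : ℝ) u w, Γ p (c • u) w = c • Γ p u w) ∧
  (∀ p u v w, fderiv ℝ (fun q => G q u v) p w = G p (Γ p w u) v + G p u (Γ p w v))

/-- The chart basis of `ℝ²`. -/
def bse : Fin 2 → ℝ × ℝ := ![(1, 0), (0, 1)]

/-!
The Brioschi formula splits the curvature of a metric into a part linear in its second derivatives
minus the Kulkarni–Nomizu square of the Christoffel vectors. For a metric of the form `⟨df, dh⟩` the
third derivatives of `f` and `h` cancel, and the linear part is the Kulkarni–Nomizu product of the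
two Hessians. Both the induced metric `⟨dψ, dψ⟩` and `II_η = ⟨dη, dψ⟩` have this form, and expanding
the Hessians in the frame `dψ`, `ψ`, `η` gives `K = -tr A_η` and
`2 K^η det II_η = K² det g - 2 (II_η(L₀₀, L₁₁) - II_η(L₀₁, L₀₁))`, where `det II_η = d det g`.
By the Codazzi equation `II_η(L(X, Y), Z)` is totally symmetric, so the last term, divided by
`det II_η`, is `|tr L|² - |L|²`; and `tr L` is half the differential of `log d`, because the trace
of a Levi-Civita connection is half the differential of the logarithm of the metric's determinant.
-/

theorem prod_eq_smul_bse (X : ℝ × ℝ) : X = X.1 • bse 0 + X.2 • bse 1 := by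
  ext <;> simp [bse]

/-- The trace of a map of the chart plane `ℝ²`, meant for linear maps. It takes an unbundled map so
that it applies to `Γ p v` for a Christoffel field `Γ`. -/
def chartTrace (T : ℝ × ℝ → ℝ × ℝ) : ℝ := (T (bse 0)).1 + (T (bse 1)).2

/-- The Gram matrix of a bilinear form on `ℝ²` in the chart basis. -/
noncomputable def chartGram (G : ℝ × ℝ →L[ℝ] ℝ × ℝ →L[ℝ] ℝ) : Matrix (Fin 2) (Fin 2) ℝ :=
  Matrix.of fun a b => G (bse a) (bse b)

/-- The `(e₀, e₁, e₁, e₀)` component of the Kulkarni–Nomizu product of two bilinear maps, whose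
values are multiplied by means of the pairing `B`. For scalar-valued forms `B` is the product of
`ℝ`; for second derivatives or Christoffel fields it is a metric. -/
def kulkarniNomizu {V : Type*} (B : V → V → ℝ) (S T : ℝ × ℝ → ℝ × ℝ → V) : ℝ :=
  B (S (bse 0) (bse 0)) (T (bse 1) (bse 1)) + B (S (bse 1) (bse 1)) (T (bse 0) (bse 0))
    - B (S (bse 0) (bse 1)) (T (bse 1) (bse 0)) - B (S (bse 1) (bse 0)) (T (bse 0) (bse 1))

section PlaneAlgebra

variable {G : ℝ × ℝ →L[ℝ] ℝ × ℝ →L[ℝ] ℝ}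

theorem det_chartGram (G : ℝ × ℝ →L[ℝ] ℝ × ℝ →L[ℝ] ℝ) :
    (chartGram G).det =
      G (bse 0) (bse 0) * G (bse 1) (bse 1) - G (bse 0) (bse 1) * G (bse 1) (bse 0) := by
  simp only [chartGram, Matrix.det_fin_two, Matrix.of_apply]

theorem bilin_apply_left (G : ℝ × ℝ →L[ℝ] ℝ × ℝ →L[ℝ] ℝ) (X Y : ℝ × ℝ) :
    G X Y = X.1 * G (bse 0) Y + X.2 * G (bse 1) Y := by
  conv_lhs => rw [prod_eq_smul_bse X]
  simp only [map_add, map_smul, add_apply, smul_apply, smul_eq_mul]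

theorem bilin_apply_right (G : ℝ × ℝ →L[ℝ] ℝ × ℝ →L[ℝ] ℝ) (X Y : ℝ × ℝ) :
    G X Y = Y.1 * G X (bse 0) + Y.2 * G X (bse 1) := by
  conv_lhs => rw [prod_eq_smul_bse Y]
  simp only [map_add, map_smul, smul_eq_mul]

theorem det_chartGram_ne_zero (hG : ∀ X, (∀ Y, G X Y = 0) → X = 0) : (chartGram G).det ≠ 0 := by
  intro hdet
  obtain ⟨x, hx, hxG⟩ := Matrix.exists_vecMul_eq_zero_iff.2 hdet
  have hpair : ∀ j, G (x 0, x 1) (bse j) = 0 := fun j => by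
    simpa [bilin_apply_left G (x 0, x 1), Matrix.vecMul, dotProduct, Fin.sum_univ_two, chartGram]
      using congrFun hxG j
  have hzero : (x 0, x 1) = (0 : ℝ × ℝ) := hG _ fun Y => by
    rw [bilin_apply_right, hpair, hpair, mul_zero, mul_zero, add_zero]
  refine hx (funext fun i => ?_)
  fin_cases i
  exacts [congrArg Prod.fst hzero, congrArg Prod.snd hzero]

theorem fst_mul_det_chartGram (hG : ∀ X Y, G X Y = G Y X) (X : ℝ × ℝ) :
    X.1 * (chartGram G).det =
      G X (bse 0) * G (bse 1) (bse 1) - G X (bse 1) * G (bse 0) (bse 1) := by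
  rw [det_chartGram, bilin_apply_left G X (bse 0), bilin_apply_left G X (bse 1),
    hG (bse 1) (bse 0)]
  ring

theorem snd_mul_det_chartGram (hG : ∀ X Y, G X Y = G Y X) (X : ℝ × ℝ) :
    X.2 * (chartGram G).det =
      G X (bse 1) * G (bse 0) (bse 0) - G X (bse 0) * G (bse 0) (bse 1) := by
  rw [det_chartGram, bilin_apply_left G X (bse 0), bilin_apply_left G X (bse 1),
    hG (bse 1) (bse 0)]
  ring

theorem bilin_mul_det_chartGram (hG : ∀ X Y, G X Y = G Y X) (X Y : ℝ × ℝ) :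
    G X Y * (chartGram G).det =
      G X (bse 0) * G Y (bse 0) * G (bse 1) (bse 1)
        - (G X (bse 0) * G Y (bse 1) + G X (bse 1) * G Y (bse 0)) * G (bse 0) (bse 1)
        + G X (bse 1) * G Y (bse 1) * G (bse 0) (bse 0) := by
  rw [bilin_apply_left G X Y, hG (bse 0) Y, hG (bse 1) Y]
  linear_combination G Y (bse 0) * fst_mul_det_chartGram hG X
    + G Y (bse 1) * snd_mul_det_chartGram hG X

theorem inv_chartGram (hG : ∀ X Y, G X Y = G Y X) :
    (chartGram G)⁻¹ = (chartGram G).det⁻¹ •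
      !![G (bse 1) (bse 1), -G (bse 0) (bse 1); -G (bse 0) (bse 1), G (bse 0) (bse 0)] := by
  rw [Matrix.inv_def, Matrix.adjugate_fin_two, Ring.inverse_eq_inv']
  simp only [chartGram, Matrix.of_apply, hG (bse 1) (bse 0)]

theorem chartTrace_mul_det_chartGram (hG : ∀ X Y, G X Y = G Y X) (T : ℝ × ℝ → ℝ × ℝ) :
    chartTrace T * (chartGram G).det =
      G (T (bse 0)) (bse 0) * G (bse 1) (bse 1) - G (T (bse 0)) (bse 1) * G (bse 0) (bse 1)
        + (G (T (bse 1)) (bse 1) * G (bse 0) (bse 0)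
          - G (T (bse 1)) (bse 0) * G (bse 0) (bse 1)) := by
  rw [chartTrace, add_mul, fst_mul_det_chartGram hG, snd_mul_det_chartGram hG]

/-- The twice contracted Gauss equation, with `L` in the role of the second fundamental form. -/
theorem sum_inv_chartGram_mul_bilin {L : ℝ × ℝ → ℝ × ℝ → ℝ × ℝ} (hG : ∀ X Y, G X Y = G Y X)
    (hdet : (chartGram G).det ≠ 0) (hL : ∀ u v, L u v = L v u)
    (hGL : ∀ u v w, G u (L v w) = G v (L u w)) :
    ∑ i : Fin 2, ∑ j : Fin 2, ∑ k : Fin 2, ∑ l : Fin 2,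
        (chartGram G)⁻¹ i k * (chartGram G)⁻¹ j l * G (L (bse i) (bse j)) (L (bse k) (bse l)) =
      ∑ i : Fin 2, ∑ j : Fin 2,
          (chartGram G)⁻¹ i j * chartTrace (L (bse i)) * chartTrace (L (bse j))
        - kulkarniNomizu (G · ·) L L / (chartGram G).det := by
  have hbilin : ∀ X Y, G X Y = _ / (chartGram G).det := fun X Y =>
    eq_div_of_mul_eq hdet (bilin_mul_det_chartGram hG X Y)
  have htrace : ∀ T, chartTrace T = _ / (chartGram G).det := fun T =>
    eq_div_of_mul_eq hdet (chartTrace_mul_det_chartGram hG T)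
  have h₁ : G (L (bse 0) (bse 1)) (bse 0) = G (L (bse 0) (bse 0)) (bse 1) := by
    rw [hG, hG _ (bse 1), hL (bse 0) (bse 1), hGL]
  have h₂ : G (L (bse 1) (bse 1)) (bse 0) = G (L (bse 0) (bse 1)) (bse 1) := by
    rw [hG, hG _ (bse 1), hGL]
  simp only [inv_chartGram hG, Fin.sum_univ_two, kulkarniNomizu, htrace, hbilin (L _ _) (L _ _),
    hL (bse 1) (bse 0), h₁, h₂, Matrix.smul_apply, smul_eq_mul, Matrix.of_apply,
    Matrix.cons_val', Matrix.cons_val_zero, Matrix.cons_val_one, Matrix.cons_val_fin_one]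
  have hD := det_chartGram G
  rw [hG (bse 1) (bse 0)] at hD
  generalize (chartGram G).det = D at *
  field_simp
  rw [hD]
  ring

theorem kulkarniNomizu_self (G : ℝ × ℝ →L[ℝ] ℝ × ℝ →L[ℝ] ℝ) :
    kulkarniNomizu (· * ·) (G · ·) (G · ·) = 2 * (chartGram G).det := by
  rw [det_chartGram, kulkarniNomizu]
  ring

theorem kulkarniNomizu_comp_left (G : ℝ × ℝ →L[ℝ] ℝ × ℝ →L[ℝ] ℝ) (T : ℝ × ℝ → ℝ × ℝ) :
    kulkarniNomizu (· * ·) (fun u v => G (T u) v) (G · ·) = chartTrace T * (chartGram G).det := by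
  rw [det_chartGram, kulkarniNomizu, chartTrace]
  simp only [bilin_apply_left G (T _)]
  ring

theorem det_eq_bse (A : ℝ × ℝ →ₗ[ℝ] ℝ × ℝ) :
    LinearMap.det A = (A (bse 0)).1 * (A (bse 1)).2 - (A (bse 1)).1 * (A (bse 0)).2 := by
  rw [← LinearMap.det_toMatrix (Module.Basis.finTwoProd ℝ), Matrix.det_fin_two]
  simp [LinearMap.toMatrix_apply, bse]

theorem det_chartGram_of_apply_eq {H : ℝ × ℝ →L[ℝ] ℝ × ℝ →L[ℝ] ℝ} {A : ℝ × ℝ →ₗ[ℝ] ℝ × ℝ}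
    (hH : ∀ u v, H u v = -G (A u) v) :
    (chartGram H).det = LinearMap.det A * (chartGram G).det := by
  simp only [det_chartGram, hH, det_eq_bse A, bilin_apply_left G (A _)]
  ring

theorem chartTrace_comp_self (A : ℝ × ℝ →ₗ[ℝ] ℝ × ℝ) :
    chartTrace (fun u => A (A u)) = chartTrace A ^ 2 - 2 * LinearMap.det A := by
  have hexp : ∀ X, A X = X.1 • A (bse 0) + X.2 • A (bse 1) := fun X => by
    conv_lhs => rw [prod_eq_smul_bse X, map_add, map_smul, map_smul]
  simp only [chartTrace, hexp (A _), det_eq_bse A, Prod.fst_add, Prod.snd_add, Prod.smul_fst,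
    Prod.smul_snd, smul_eq_mul]
  ring

end PlaneAlgebra

section LeviCivita

variable {G H : ℝ × ℝ → ℝ × ℝ →L[ℝ] ℝ × ℝ →L[ℝ] ℝ}
  {Γ Γ' : ℝ × ℝ → ℝ × ℝ → ℝ × ℝ → ℝ × ℝ} {p : ℝ × ℝ}

/-- The Gauss curvature of a metric field on the chart, given by the Brioschi formula. -/
noncomputable def gaussCurvature (G : ℝ × ℝ → ℝ × ℝ →L[ℝ] ℝ × ℝ →L[ℝ] ℝ) (p : ℝ × ℝ) : ℝ :=
  brioschi (fun q => G q (bse 0) (bse 0)) (fun q => G q (bse 0) (bse 1))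
    (fun q => G q (bse 1) (bse 1)) p

/-- The part `-½ E_yy + F_xy - ½ G_xx` of the Brioschi formula that contains the second derivatives
of the metric, that is, the linearisation of the curvature at a flat metric. -/
noncomputable def linearizedCurvature (G : ℝ × ℝ → ℝ × ℝ →L[ℝ] ℝ × ℝ →L[ℝ] ℝ) (p : ℝ × ℝ) : ℝ :=
  -(1 / 2) * pd2 (pd2 fun q => G q (bse 0) (bse 0)) p
    + pd1 (pd2 fun q => G q (bse 0) (bse 1)) p
    - (1 / 2) * pd1 (pd1 fun q => G q (bse 1) (bse 1)) p

/-- The difference of the two Brioschi determinants is quadratic in the Christoffel symbols of the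
first kind `G(Γᵢⱼ, eₖ)`; Cramer's rule turns it into products of the vectors `Γᵢⱼ`. -/
theorem gaussCurvature_mul_det_chartGram (hG : ∀ u v, G p u v = G p v u)
    (hΓ : IsLeviCivita (fun q u v => G q u v) Γ) (hdet : (chartGram (G p)).det ≠ 0) :
    2 * gaussCurvature G p * (chartGram (G p)).det =
      2 * linearizedCurvature G p - kulkarniNomizu (G p · ·) (Γ p) (Γ p) := by
  obtain ⟨hΓsymm, -, -, hΓmetric⟩ := hΓ
  have hderiv : ∀ i j k, fderiv ℝ (fun q => G q (bse i) (bse j)) p (bse k) =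
      G p (Γ p (bse k) (bse i)) (bse j) + G p (Γ p (bse k) (bse j)) (bse i) := fun i j k =>
    (hΓmetric p _ _ _).trans (congrArg _ (hG _ _))
  have hpd1 : ∀ f : ℝ × ℝ → ℝ, pd1 f p = fderiv ℝ f p (bse 0) := fun _ => rfl
  have hpd2 : ∀ f : ℝ × ℝ → ℝ, pd2 f p = fderiv ℝ f p (bse 1) := fun _ => rfl
  have hD : G p (bse 0) (bse 0) * G p (bse 1) (bse 1) - G p (bse 0) (bse 1) ^ 2 =
      (chartGram (G p)).det := by
    rw [det_chartGram, hG (bse 1) (bse 0), sq]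
  have h₁ := bilin_mul_det_chartGram hG (Γ p (bse 0) (bse 0)) (Γ p (bse 1) (bse 1))
  have h₂ := bilin_mul_det_chartGram hG (Γ p (bse 0) (bse 1)) (Γ p (bse 0) (bse 1))
  have hbrioschi : gaussCurvature G p * (chartGram (G p)).det ^ 2 =
      linearizedCurvature G p * (chartGram (G p)).det
        - (G p (Γ p (bse 0) (bse 0)) (Γ p (bse 1) (bse 1))
          - G p (Γ p (bse 0) (bse 1)) (Γ p (bse 0) (bse 1))) * (chartGram (G p)).det := by
    rw [sub_mul, h₁, h₂, gaussCurvature, brioschi, hD, div_mul_cancel₀ _ (pow_ne_zero 2 hdet),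
      ← hD, ← linearizedCurvature]
    simp only [Matrix.det_fin_three, Matrix.of_apply, Matrix.cons_val', Matrix.cons_val_zero,
      Matrix.cons_val_one, Matrix.cons_val]
    rw [hpd1, hpd1, hpd1, hpd2, hpd2, hpd2]
    simp only [hderiv, hΓsymm p (bse 1) (bse 0)]
    ring
  apply mul_right_cancel₀ hdet
  rw [kulkarniNomizu, hΓsymm p (bse 1) (bse 0), hG (Γ p (bse 1) (bse 1))]
  linear_combination 2 * hbrioschi

theorem differentiableAt_det_chartGram (hG : ∀ u v, DifferentiableAt ℝ (fun q => G q u v) p) :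
    DifferentiableAt ℝ (fun q => (chartGram (G q)).det) p := by
  simp only [det_chartGram]
  exact ((hG _ _).fun_mul (hG _ _)).fun_sub ((hG _ _).fun_mul (hG _ _))

/-- With `C` the matrix of `Γ p v`, the Gram matrix has derivative `Cᵀ M + M C` along `v`. -/
theorem fderiv_det_chartGram_of_isLeviCivita
    (hG : ∀ u v, DifferentiableAt ℝ (fun q => G q u v) p)
    (hΓ : IsLeviCivita (fun q u v => G q u v) Γ) (v : ℝ × ℝ) :
    fderiv ℝ (fun q => (chartGram (G q)).det) p v =
      2 * chartTrace (Γ p v) * (chartGram (G p)).det := by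
  have hderiv : ∀ a b, fderiv ℝ (fun q => G q a b) p v = G p (Γ p v a) b + G p a (Γ p v b) :=
    fun a b => hΓ.2.2.2 p a b v
  simp only [det_chartGram]
  rw [fderiv_fun_sub ((hG _ _).fun_mul (hG _ _)) ((hG _ _).fun_mul (hG _ _)),
    fderiv_fun_mul (hG _ _) (hG _ _), fderiv_fun_mul (hG _ _) (hG _ _)]
  simp only [sub_apply, add_apply, smul_apply, smul_eq_mul, hderiv, chartTrace,
    bilin_apply_left (G p) (Γ p _ _), bilin_apply_right (G p) _ (Γ p _ _)]
  ring

theorem fderiv_det_chartGram_div_of_isLeviCivita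
    (hG : ∀ u v, DifferentiableAt ℝ (fun q => G q u v) p)
    (hH : ∀ u v, DifferentiableAt ℝ (fun q => H q u v) p)
    (hΓ : IsLeviCivita (fun q u v => G q u v) Γ) (hΓ' : IsLeviCivita (fun q u v => H q u v) Γ')
    (hdet : (chartGram (G p)).det ≠ 0) (v : ℝ × ℝ) :
    fderiv ℝ (fun q => (chartGram (H q)).det / (chartGram (G q)).det) p v =
      2 * ((chartGram (H p)).det / (chartGram (G p)).det)
        * (chartTrace (Γ' p v) - chartTrace (Γ p v)) := by
  have hdG := differentiableAt_det_chartGram hG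
  have hdH := differentiableAt_det_chartGram hH
  have hinv : fderiv ℝ (fun q => (chartGram (G q)).det⁻¹) p = _ :=
    ((hasDerivAt_inv hdet).comp_hasFDerivAt p hdG.hasFDerivAt).fderiv
  simp only [div_eq_mul_inv]
  rw [fderiv_fun_mul hdH (hdG.fun_inv hdet), hinv]
  simp only [add_apply, smul_apply, smul_eq_mul, fderiv_det_chartGram_of_isLeviCivita hG hΓ,
    fderiv_det_chartGram_of_isLeviCivita hH hΓ']
  field_simp
  ring

end LeviCivita

section DerivForm

variable {E V : Type*} [NormedAddCommGroup E] [NormedSpace ℝ E]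
  [NormedAddCommGroup V] [NormedSpace ℝ V] {B : V →L[ℝ] V →L[ℝ] ℝ} {f h : E → V} {p : E}

/-- The field of bilinear forms `⟨df, dh⟩`. For an immersion `ψ` with normal field `η`, the cases
`(ψ, ψ)`, `(η, ψ)` and `(η, η)` are the first, second and third fundamental forms `g`, `II_η` and
`g(A_η ·, A_η ·)`; with the convention `dη = -dψ ∘ A_η` the second one is `-g(A_η ·, ·)`. -/
noncomputable def derivForm (B : V →L[ℝ] V →L[ℝ] ℝ) (f h : E → V) (p : E) : E →L[ℝ] E →L[ℝ] ℝ :=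
  B.bilinearComp (fderiv ℝ f p) (fderiv ℝ h p)

theorem derivForm_apply (u v : E) :
    derivForm B f h p u v = B (fderiv ℝ f p u) (fderiv ℝ h p v) := rfl

theorem derivForm_self_comm (hB : ∀ x y, B x y = B y x) (u v : E) :
    derivForm B f f p u v = derivForm B f f p v u :=
  hB _ _

theorem differentiable_fderiv (hf : ContDiff ℝ 2 f) : Differentiable ℝ (fderiv ℝ f) :=
  (hf.fderiv_right (m := 1) (by norm_num)).differentiable one_ne_zero

theorem differentiableAt_fderiv_apply (hf : ContDiff ℝ 2 f) (u : E) :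
    DifferentiableAt ℝ (fun q => fderiv ℝ f q u) p :=
  (differentiable_fderiv hf p).clm_apply (differentiableAt_const u)

theorem differentiableAt_derivForm_apply (hf : ContDiff ℝ 2 f) (hh : ContDiff ℝ 2 h) (u v : E) :
    DifferentiableAt ℝ (fun q => derivForm B f h q u v) p :=
  (B.isBoundedBilinearMap.differentiableAt _).comp p
    ((differentiableAt_fderiv_apply hf u).prodMk (differentiableAt_fderiv_apply hh v))

theorem fderiv_bilin_apply (hf : DifferentiableAt ℝ f p) (hh : DifferentiableAt ℝ h p) (v : E) :
    fderiv ℝ (fun q => B (f q) (h q)) p v =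
      B (fderiv ℝ f p v) (h p) + B (f p) (fderiv ℝ h p v) := by
  rw [B.fderiv_of_bilinear hf hh, add_comm]
  rfl

theorem fderiv_fderiv_apply (hf : ContDiff ℝ 2 f) (u v : E) :
    fderiv ℝ (fun q => fderiv ℝ f q u) p v = fderiv ℝ (fderiv ℝ f) p v u := by
  simp [fderiv_clm_apply (differentiable_fderiv hf p) (differentiableAt_const u)]

theorem fderiv_fderiv_comm (hf : ContDiff ℝ 2 f) (u v : E) :
    fderiv ℝ (fderiv ℝ f) p u v = fderiv ℝ (fderiv ℝ f) p v u :=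
  hf.contDiffAt.isSymmSndFDerivAt (by simp) u v

theorem contDiff_fderiv_apply (hf : ContDiff ℝ 3 f) (u : E) :
    ContDiff ℝ 2 fun q => fderiv ℝ f q u :=
  (hf.fderiv_right (m := 2) (by norm_num)).clm_apply contDiff_const

theorem fderiv_fderiv_apply_comm (hf : ContDiff ℝ 3 f) (u v w : E) :
    fderiv ℝ (fderiv ℝ fun q => fderiv ℝ f q u) p w v =
      fderiv ℝ (fderiv ℝ fun q => fderiv ℝ f q v) p w u := by
  have hf₂ : ContDiff ℝ 2 f := hf.of_le (by norm_num)
  rw [← fderiv_fderiv_apply (contDiff_fderiv_apply hf u),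
    ← fderiv_fderiv_apply (contDiff_fderiv_apply hf v)]
  simp only [fderiv_fderiv_apply hf₂, fderiv_fderiv_comm hf₂ u]

theorem fderiv_fderiv_bilin_apply {a b : E} (hf : ContDiff ℝ 2 f) (hh : ContDiff ℝ 2 h) :
    fderiv ℝ (fun q => fderiv ℝ (fun r => B (f r) (h r)) q a) p b =
      B (fderiv ℝ (fderiv ℝ f) p b a) (h p) + B (fderiv ℝ f p a) (fderiv ℝ h p b)
        + (B (fderiv ℝ f p b) (fderiv ℝ h p a) + B (f p) (fderiv ℝ (fderiv ℝ h) p b a)) := by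
  have hf₁ := hf.differentiable two_ne_zero
  have hh₁ := hh.differentiable two_ne_zero
  have hf₂ := differentiableAt_fderiv_apply (p := p) hf a
  have hh₂ := differentiableAt_fderiv_apply (p := p) hh a
  simp only [fderiv_bilin_apply (hf₁ _) (hh₁ _)]
  rw [fderiv_fun_add (by fun_prop) (by fun_prop), add_apply, fderiv_bilin_apply hf₂ (hh₁ p),
    fderiv_bilin_apply (hf₁ p) hh₂, fderiv_fderiv_apply hf, fderiv_fderiv_apply hh]

theorem fderiv_derivForm_apply (hf : ContDiff ℝ 2 f) (hh : ContDiff ℝ 2 h) (u v w : E) :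
    fderiv ℝ (fun q => derivForm B f h q u v) p w =
      B (fderiv ℝ (fderiv ℝ f) p w u) (fderiv ℝ h p v)
        + B (fderiv ℝ f p u) (fderiv ℝ (fderiv ℝ h) p w v) := by
  simp only [derivForm_apply]
  rw [fderiv_bilin_apply (differentiableAt_fderiv_apply hf u) (differentiableAt_fderiv_apply hh v),
    fderiv_fderiv_apply hf, fderiv_fderiv_apply hh]

theorem fderiv_fderiv_derivForm_apply (hf : ContDiff ℝ 3 f) (hh : ContDiff ℝ 3 h) (u v a b : E) :
    fderiv ℝ (fun q => fderiv ℝ (fun r => derivForm B f h r u v) q a) p b =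
      B (fderiv ℝ (fderiv ℝ fun q => fderiv ℝ f q u) p b a) (fderiv ℝ h p v)
        + B (fderiv ℝ (fderiv ℝ f) p a u) (fderiv ℝ (fderiv ℝ h) p b v)
        + (B (fderiv ℝ (fderiv ℝ f) p b u) (fderiv ℝ (fderiv ℝ h) p a v)
          + B (fderiv ℝ f p u) (fderiv ℝ (fderiv ℝ fun q => fderiv ℝ h q v) p b a)) := by
  simp only [derivForm_apply]
  rw [fderiv_fderiv_bilin_apply (contDiff_fderiv_apply hf u) (contDiff_fderiv_apply hh v)]
  simp only [fderiv_fderiv_apply (hf.of_le (by norm_num) : ContDiff ℝ 2 f),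
    fderiv_fderiv_apply (hh.of_le (by norm_num) : ContDiff ℝ 2 h)]

theorem bilin_fderiv_fderiv_of_orthogonal (hf : ContDiff ℝ 2 f) (hh : ContDiff ℝ 2 h)
    (horth : ∀ q v, B (f q) (fderiv ℝ h q v) = 0) (u v : E) :
    B (f p) (fderiv ℝ (fderiv ℝ h) p u v) = -derivForm B f h p u v := by
  have hleibniz := fderiv_bilin_apply (B := B) (hf.differentiable two_ne_zero p)
    (differentiableAt_fderiv_apply hh v) u
  simp only [horth, fderiv_fderiv_apply hh, fderiv_fun_const, Pi.zero_apply, zero_apply]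
    at hleibniz
  rw [derivForm_apply]
  linarith

theorem derivForm_comm_of_orthogonal (hf : ContDiff ℝ 2 f) (hh : ContDiff ℝ 2 h)
    (horth : ∀ q v, B (f q) (fderiv ℝ h q v) = 0) (u v : E) :
    derivForm B f h p u v = derivForm B f h p v u := by
  rw [← neg_inj, ← bilin_fderiv_fderiv_of_orthogonal hf hh horth,
    ← bilin_fderiv_fderiv_of_orthogonal hf hh horth, fderiv_fderiv_comm hh]

theorem derivForm_apply_of_fderiv_eq_neg {A : E → E}
    (hA : ∀ v, fderiv ℝ f p v = -fderiv ℝ h p (A v)) (u v : E) :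
    derivForm B f h p u v = -derivForm B h h p (A u) v := by
  simp only [derivForm_apply, hA, map_neg, neg_apply]

end DerivForm

/-- The third derivatives cancel in pairs once `F_xy` is written as the mean of `⟨f_x, h_y⟩_xy` and
`⟨f_y, h_x⟩_xy`. -/
theorem linearizedCurvature_derivForm {V : Type*} [NormedAddCommGroup V] [NormedSpace ℝ V]
    {B : V →L[ℝ] V →L[ℝ] ℝ} {f h : ℝ × ℝ → V} (hf : ContDiff ℝ 3 f) (hh : ContDiff ℝ 3 h)
    (hsymm : ∀ q u v, derivForm B f h q u v = derivForm B f h q v u) (p : ℝ × ℝ) :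
    2 * linearizedCurvature (derivForm B f h) p =
      kulkarniNomizu (B · ·) (fderiv ℝ (fderiv ℝ f) p · ·) (fderiv ℝ (fderiv ℝ h) p · ·) := by
  have hf₂ : ContDiff ℝ 2 f := hf.of_le (by norm_num)
  have hh₂ : ContDiff ℝ 2 h := hh.of_le (by norm_num)
  have hmixed : pd1 (pd2 fun q => derivForm B f h q (bse 0) (bse 1)) p =
      pd1 (pd2 fun q => derivForm B f h q (bse 1) (bse 0)) p := by
    simp only [hsymm _ (bse 0)]
  have hEyy : pd2 (pd2 fun q => derivForm B f h q (bse 0) (bse 0)) p = _ :=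
    fderiv_fderiv_derivForm_apply hf hh (bse 0) (bse 0) (bse 1) (bse 1)
  have hFxy : pd1 (pd2 fun q => derivForm B f h q (bse 0) (bse 1)) p = _ :=
    fderiv_fderiv_derivForm_apply hf hh (bse 0) (bse 1) (bse 1) (bse 0)
  have hFxy' : pd1 (pd2 fun q => derivForm B f h q (bse 1) (bse 0)) p = _ :=
    fderiv_fderiv_derivForm_apply hf hh (bse 1) (bse 0) (bse 1) (bse 0)
  have hGxx : pd1 (pd1 fun q => derivForm B f h q (bse 1) (bse 1)) p = _ :=
    fderiv_fderiv_derivForm_apply hf hh (bse 1) (bse 1) (bse 0) (bse 0)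
  rw [fderiv_fderiv_apply_comm hf, fderiv_fderiv_comm (contDiff_fderiv_apply hh (bse 1)),
    fderiv_fderiv_apply_comm hh (bse 1)] at hFxy
  rw [fderiv_fderiv_comm (contDiff_fderiv_apply hf (bse 1)), fderiv_fderiv_apply_comm hf (bse 1),
    fderiv_fderiv_apply_comm hh (bse 0)] at hFxy'
  simp only [linearizedCurvature, kulkarniNomizu, fderiv_fderiv_comm hf₂ (bse 1) (bse 0),
    fderiv_fderiv_comm hh₂ (bse 1) (bse 0)] at *
  linarith

theorem eq_zero_of_symm_of_antisymm {α : Type*} {T : α → α → α → ℝ}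
    (hsymm : ∀ u v w, T u v w = T v u w) (hanti : ∀ u v w, T u v w = -T u w v) (u v w : α) :
    T u v w = 0 := by
  linarith [hsymm u v w, hanti v u w, hsymm v w u, hanti w v u, hsymm w u v, hanti u w v]

section Lightcone

variable {E V : Type*} [NormedAddCommGroup E] [NormedSpace ℝ E]
  [NormedAddCommGroup V] [NormedSpace ℝ V] {B : V →L[ℝ] V →L[ℝ] ℝ} {ψ η : E → V}

/-- An immersion `ψ` through the lightcone of the pairing `B` together with its lightlike normal
field `η`, normalised by `⟨ψ, η⟩ = 1`. That `ψ` is an immersion is encoded by the nondegeneracy of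
the induced form, whose signature is arbitrary. -/
structure IsLightconeImmersion (B : V →L[ℝ] V →L[ℝ] ℝ) (ψ η : E → V) : Prop where
  symm : ∀ x y, B x y = B y x
  contDiff : ContDiff ℝ 3 ψ
  contDiff_normal : ContDiff ℝ 3 η
  bilin_self_self : ∀ p, B (ψ p) (ψ p) = 0
  bilin_normal_normal : ∀ p, B (η p) (η p) = 0
  bilin_self_normal : ∀ p, B (ψ p) (η p) = 1
  bilin_normal_fderiv_self : ∀ p v, B (η p) (fderiv ℝ ψ p v) = 0
  nondegenerate : ∀ p u, (∀ v, derivForm B ψ ψ p u v = 0) → u = 0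

namespace IsLightconeImmersion

theorem contDiff_two (h : IsLightconeImmersion B ψ η) : ContDiff ℝ 2 ψ :=
  h.contDiff.of_le (by norm_num)

theorem contDiff_two_normal (h : IsLightconeImmersion B ψ η) : ContDiff ℝ 2 η :=
  h.contDiff_normal.of_le (by norm_num)

theorem bilin_self_fderiv_self (h : IsLightconeImmersion B ψ η) (p v : E) :
    B (ψ p) (fderiv ℝ ψ p v) = 0 := by
  have hψ := h.contDiff_two.differentiable two_ne_zero p
  have hleibniz := fderiv_bilin_apply (B := B) hψ hψ v
  simp only [h.bilin_self_self, fderiv_fun_const, Pi.zero_apply, zero_apply] at hleibniz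
  linarith [h.symm (fderiv ℝ ψ p v) (ψ p)]

theorem bilin_normal_fderiv_normal (h : IsLightconeImmersion B ψ η) (p v : E) :
    B (η p) (fderiv ℝ η p v) = 0 := by
  have hη := h.contDiff_two_normal.differentiable two_ne_zero p
  have hleibniz := fderiv_bilin_apply (B := B) hη hη v
  simp only [h.bilin_normal_normal, fderiv_fun_const, Pi.zero_apply, zero_apply] at hleibniz
  linarith [h.symm (fderiv ℝ η p v) (η p)]

theorem bilin_self_fderiv_normal (h : IsLightconeImmersion B ψ η) (p v : E) :
    B (ψ p) (fderiv ℝ η p v) = 0 := by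
  have hψ := h.contDiff_two.differentiable two_ne_zero p
  have hη := h.contDiff_two_normal.differentiable two_ne_zero p
  have hleibniz := fderiv_bilin_apply (B := B) hψ hη v
  simp only [h.bilin_self_normal, fderiv_fun_const, Pi.zero_apply, zero_apply] at hleibniz
  linarith [h.symm (fderiv ℝ ψ p v) (η p), h.bilin_normal_fderiv_self p v]

theorem derivForm_normal_self_comm (h : IsLightconeImmersion B ψ η) (p u v : E) :
    derivForm B η ψ p u v = derivForm B η ψ p v u :=
  derivForm_comm_of_orthogonal h.contDiff_two_normal h.contDiff_two h.bilin_normal_fderiv_self u v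

theorem bilin_self_fderiv_fderiv_self (h : IsLightconeImmersion B ψ η) (p u v : E) :
    B (ψ p) (fderiv ℝ (fderiv ℝ ψ) p u v) = -derivForm B ψ ψ p u v :=
  bilin_fderiv_fderiv_of_orthogonal h.contDiff_two h.contDiff_two h.bilin_self_fderiv_self u v

theorem bilin_normal_fderiv_fderiv_self (h : IsLightconeImmersion B ψ η) (p u v : E) :
    B (η p) (fderiv ℝ (fderiv ℝ ψ) p u v) = -derivForm B η ψ p u v :=
  bilin_fderiv_fderiv_of_orthogonal h.contDiff_two_normal h.contDiff_two
    h.bilin_normal_fderiv_self u v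

theorem bilin_normal_fderiv_fderiv_normal (h : IsLightconeImmersion B ψ η) (p u v : E) :
    B (η p) (fderiv ℝ (fderiv ℝ η) p u v) = -derivForm B η η p u v :=
  bilin_fderiv_fderiv_of_orthogonal h.contDiff_two_normal h.contDiff_two_normal
    h.bilin_normal_fderiv_normal u v

theorem bilin_self_fderiv_fderiv_normal (h : IsLightconeImmersion B ψ η) (p u v : E) :
    B (ψ p) (fderiv ℝ (fderiv ℝ η) p u v) = -derivForm B η ψ p u v := by
  rw [bilin_fderiv_fderiv_of_orthogonal h.contDiff_two h.contDiff_two_normal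
      h.bilin_self_fderiv_normal, h.derivForm_normal_self_comm, derivForm_apply, derivForm_apply,
    h.symm]

/-- Codimension two makes `dψ`, `ψ`, `η` a frame of `V` along `ψ`. -/
theorem eq_zero_of_orthogonal [FiniteDimensional ℝ E] (h : IsLightconeImmersion B ψ η)
    (hdim : Module.finrank ℝ V = Module.finrank ℝ E + 2) {p : E} {w : V} (hψ : B w (ψ p) = 0)
    (hη : B w (η p) = 0) (hdψ : ∀ v, B w (fderiv ℝ ψ p v) = 0) : w = 0 := by
  have : FiniteDimensional ℝ V := Module.finite_of_finrank_pos (by omega)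
  let Φ : E × ℝ × ℝ →ₗ[ℝ] V := (fderiv ℝ ψ p).toLinearMap.coprod
    ((LinearMap.toSpanSingleton ℝ V (ψ p)).coprod (LinearMap.toSpanSingleton ℝ V (η p)))
  have hΦ : ∀ x, Φ x = fderiv ℝ ψ p x.1 + (x.2.1 • ψ p + x.2.2 • η p) := fun _ => rfl
  have hzero : ∀ x, B (Φ x) (ψ p) = 0 → B (Φ x) (η p) = 0 →
      (∀ v, B (Φ x) (fderiv ℝ ψ p v) = 0) → x = 0 := fun x h₁ h₂ h₃ => by
    simp only [hΦ, map_add, map_smul, add_apply, smul_apply, smul_eq_mul,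
      h.symm _ (ψ p), h.symm (fderiv ℝ ψ p x.1) (η p), h.bilin_self_self, h.bilin_self_normal,
      h.bilin_normal_normal, h.bilin_self_fderiv_self, h.bilin_normal_fderiv_self, mul_zero,
      mul_one, zero_add, add_zero] at h₁ h₂ h₃
    exact Prod.ext (h.nondegenerate p _ h₃) (Prod.ext h₂ h₁)
  have hinj : Function.Injective Φ := (injective_iff_map_eq_zero Φ).2 fun x hx =>
    hzero x (by simp [hx]) (by simp [hx]) (by simp [hx])
  obtain ⟨x, rfl⟩ :=
    (LinearMap.injective_iff_surjective_of_finrank_eq_finrank (by simp [hdim])).1 hinj w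
  rw [hzero x hψ hη hdψ, map_zero]

end IsLightconeImmersion

end Lightcone

section LightconeSurface

variable {V : Type*} [NormedAddCommGroup V] [NormedSpace ℝ V] {B : V →L[ℝ] V →L[ℝ] ℝ}
  {ψ η : ℝ × ℝ → V} {A : ℝ × ℝ → ℝ × ℝ →ₗ[ℝ] ℝ × ℝ}
  {Γ Γeta L : ℝ × ℝ → ℝ × ℝ → ℝ × ℝ → ℝ × ℝ} {p : ℝ × ℝ}

namespace IsLightconeImmersion

theorem bilin_fderiv_fderiv_self_fderiv_self (h : IsLightconeImmersion B ψ η)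
    (hΓ : IsLeviCivita (fun q u v => derivForm B ψ ψ q u v) Γ) (u v w : ℝ × ℝ) :
    B (fderiv ℝ (fderiv ℝ ψ) p u v) (fderiv ℝ ψ p w) = derivForm B ψ ψ p (Γ p u v) w := by
  refine sub_eq_zero.1 (eq_zero_of_symm_of_antisymm (T := fun u v w =>
    B (fderiv ℝ (fderiv ℝ ψ) p u v) (fderiv ℝ ψ p w) - derivForm B ψ ψ p (Γ p u v) w)
    (fun u v w => ?_) (fun u v w => ?_) u v w)
  · simp only [fderiv_fderiv_comm h.contDiff_two u v, hΓ.1 p u v]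
  · have hmetric := hΓ.2.2.2 p v w u
    rw [fderiv_derivForm_apply h.contDiff_two h.contDiff_two, h.symm (fderiv ℝ ψ p v)] at hmetric
    linarith [derivForm_self_comm (f := ψ) (p := p) h.symm v (Γ p u w)]

theorem gauss_formula (h : IsLightconeImmersion B ψ η) (hdim : Module.finrank ℝ V = 4)
    (hΓ : IsLeviCivita (fun q u v => derivForm B ψ ψ q u v) Γ) (u v : ℝ × ℝ) :
    fderiv ℝ (fderiv ℝ ψ) p u v = fderiv ℝ ψ p (Γ p u v)
      - derivForm B η ψ p u v • ψ p - derivForm B ψ ψ p u v • η p := by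
  refine sub_eq_zero.1 (h.eq_zero_of_orthogonal (p := p) (by simp [hdim]) ?_ ?_ fun w => ?_)
  · simp [h.symm _ (ψ p), h.bilin_self_fderiv_fderiv_self, h.bilin_self_self,
      h.bilin_self_normal, h.bilin_self_fderiv_self]
  · simp [h.symm _ (η p), h.bilin_normal_fderiv_fderiv_self, h.bilin_normal_normal,
      (h.symm (η p) (ψ p)).trans (h.bilin_self_normal p), h.bilin_normal_fderiv_self]
  · simp [h.bilin_fderiv_fderiv_self_fderiv_self hΓ, derivForm_apply, h.bilin_self_fderiv_self,
      h.bilin_normal_fderiv_self]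

theorem bilin_fderiv_fderiv_self_right (h : IsLightconeImmersion B ψ η)
    (hdim : Module.finrank ℝ V = 4) (hΓ : IsLeviCivita (fun q u v => derivForm B ψ ψ q u v) Γ)
    (u v : ℝ × ℝ) (w : V) :
    B w (fderiv ℝ (fderiv ℝ ψ) p u v) = B w (fderiv ℝ ψ p (Γ p u v))
      - derivForm B η ψ p u v * B w (ψ p) - derivForm B ψ ψ p u v * B w (η p) := by
  simp only [h.gauss_formula hdim hΓ, map_sub, map_smul, smul_eq_mul]

/-- The left hand side is symmetric in `u` and `v`, so this contains the Codazzi equation. -/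
theorem bilin_fderiv_fderiv_normal_fderiv_self (h : IsLightconeImmersion B ψ η)
    (hdim : Module.finrank ℝ V = 4) (hΓ : IsLeviCivita (fun q u v => derivForm B ψ ψ q u v) Γ)
    (hΓeta : IsLeviCivita (fun q u v => derivForm B η ψ q u v) Γeta)
    (hL : ∀ p u v, L p u v = Γeta p u v - Γ p u v) (u v w : ℝ × ℝ) :
    B (fderiv ℝ (fderiv ℝ η) p u v) (fderiv ℝ ψ p w) =
      derivForm B η ψ p (Γeta p u v) w + derivForm B η ψ p v (L p u w) := by
  have hmetric := hΓeta.2.2.2 p v w u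
  rw [fderiv_derivForm_apply h.contDiff_two_normal h.contDiff_two,
    h.bilin_fderiv_fderiv_self_right hdim hΓ, h.symm _ (ψ p), h.symm _ (η p),
    h.bilin_self_fderiv_normal, h.bilin_normal_fderiv_normal, ← derivForm_apply] at hmetric
  rw [hL, map_sub]
  linarith

theorem derivForm_difference_comm (h : IsLightconeImmersion B ψ η)
    (hdim : Module.finrank ℝ V = 4) (hΓ : IsLeviCivita (fun q u v => derivForm B ψ ψ q u v) Γ)
    (hΓeta : IsLeviCivita (fun q u v => derivForm B η ψ q u v) Γeta)
    (hL : ∀ p u v, L p u v = Γeta p u v - Γ p u v) (u v w : ℝ × ℝ) :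
    derivForm B η ψ p u (L p v w) = derivForm B η ψ p v (L p u w) := by
  have huv := h.bilin_fderiv_fderiv_normal_fderiv_self (p := p) hdim hΓ hΓeta hL u v w
  have hvu := h.bilin_fderiv_fderiv_normal_fderiv_self (p := p) hdim hΓ hΓeta hL v u w
  rw [fderiv_fderiv_comm h.contDiff_two_normal, hΓeta.1] at huv
  linarith

theorem bilin_fderiv_fderiv_self_fderiv_fderiv_self (h : IsLightconeImmersion B ψ η)
    (hdim : Module.finrank ℝ V = 4) (hΓ : IsLeviCivita (fun q u v => derivForm B ψ ψ q u v) Γ)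
    (u v x y : ℝ × ℝ) :
    B (fderiv ℝ (fderiv ℝ ψ) p u v) (fderiv ℝ (fderiv ℝ ψ) p x y) =
      derivForm B ψ ψ p (Γ p u v) (Γ p x y)
        + derivForm B ψ ψ p u v * derivForm B η ψ p x y
        + derivForm B η ψ p u v * derivForm B ψ ψ p x y := by
  rw [h.bilin_fderiv_fderiv_self_right hdim hΓ x y, h.bilin_fderiv_fderiv_self_fderiv_self hΓ,
    h.symm _ (ψ p), h.symm _ (η p), h.bilin_self_fderiv_fderiv_self,
    h.bilin_normal_fderiv_fderiv_self]
  ring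

theorem bilin_fderiv_fderiv_normal_fderiv_fderiv_self (h : IsLightconeImmersion B ψ η)
    (hdim : Module.finrank ℝ V = 4) (hΓ : IsLeviCivita (fun q u v => derivForm B ψ ψ q u v) Γ)
    (hΓeta : IsLeviCivita (fun q u v => derivForm B η ψ q u v) Γeta)
    (hL : ∀ p u v, L p u v = Γeta p u v - Γ p u v) (u v x y : ℝ × ℝ) :
    B (fderiv ℝ (fderiv ℝ η) p u v) (fderiv ℝ (fderiv ℝ ψ) p x y) =
      derivForm B η ψ p (Γeta p u v + L p u v) (Γeta p x y - L p x y)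
        + derivForm B η ψ p u v * derivForm B η ψ p x y
        + derivForm B η η p u v * derivForm B ψ ψ p x y := by
  have hLsymm : ∀ a b, L p a b = L p b a := fun a b => by rw [hL, hL, hΓ.1 p a b, hΓeta.1 p a b]
  have hΓxy : Γ p x y = Γeta p x y - L p x y := by rw [hL, sub_sub_cancel]
  rw [h.bilin_fderiv_fderiv_self_right hdim hΓ x y, h.symm _ (ψ p), h.symm _ (η p),
    h.bilin_self_fderiv_fderiv_normal, h.bilin_normal_fderiv_fderiv_normal,
    h.bilin_fderiv_fderiv_normal_fderiv_self hdim hΓ hΓeta hL, hLsymm u,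
    h.derivForm_difference_comm hdim hΓ hΓeta hL v, h.derivForm_normal_self_comm p (Γ p x y),
    hLsymm v, ← hΓxy, map_add, add_apply]
  ring

theorem derivForm_normal_normal_apply (h : IsLightconeImmersion B ψ η)
    (hWein : ∀ v, fderiv ℝ η p v = -fderiv ℝ ψ p (A p v)) (u v : ℝ × ℝ) :
    derivForm B η η p u v = derivForm B ψ ψ p (A p (A p u)) v := by
  calc derivForm B η η p u v = derivForm B η η p v u := derivForm_self_comm h.symm u v
    _ = -derivForm B η ψ p v (A p u) := by simp only [derivForm_apply, hWein u, map_neg]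
    _ = -derivForm B η ψ p (A p u) v := by rw [h.derivForm_normal_self_comm]
    _ = derivForm B ψ ψ p (A p (A p u)) v := by
      rw [derivForm_apply_of_fderiv_eq_neg hWein, neg_neg]

theorem gaussCurvature_derivForm_self (h : IsLightconeImmersion B ψ η)
    (hdim : Module.finrank ℝ V = 4) (hWein : ∀ v, fderiv ℝ η p v = -fderiv ℝ ψ p (A p v))
    (hΓ : IsLeviCivita (fun q u v => derivForm B ψ ψ q u v) Γ) :
    gaussCurvature (derivForm B ψ ψ) p = -chartTrace (A p) := by
  have hdet := det_chartGram_ne_zero (h.nondegenerate p)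
  have hI : ∀ q u v, derivForm B ψ ψ q u v = derivForm B ψ ψ q v u := fun _ =>
    derivForm_self_comm h.symm
  have hKN : kulkarniNomizu (B · ·) (fderiv ℝ (fderiv ℝ ψ) p · ·) (fderiv ℝ (fderiv ℝ ψ) p · ·) =
      kulkarniNomizu (derivForm B ψ ψ p · ·) (Γ p) (Γ p)
        - 2 * (chartTrace (A p) * (chartGram (derivForm B ψ ψ p)).det) := by
    rw [← kulkarniNomizu_comp_left]
    simp only [kulkarniNomizu, h.bilin_fderiv_fderiv_self_fderiv_fderiv_self hdim hΓ,
      derivForm_apply_of_fderiv_eq_neg hWein]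
    ring
  have hcurv := gaussCurvature_mul_det_chartGram (hI p) hΓ hdet
  rw [linearizedCurvature_derivForm h.contDiff h.contDiff hI, hKN] at hcurv
  apply mul_right_cancel₀ hdet
  linarith

theorem gaussCurvature_derivForm_normal_self (h : IsLightconeImmersion B ψ η)
    (hdim : Module.finrank ℝ V = 4) (hWein : ∀ v, fderiv ℝ η p v = -fderiv ℝ ψ p (A p v))
    (hdet : (chartGram (derivForm B η ψ p)).det ≠ 0)
    (hΓ : IsLeviCivita (fun q u v => derivForm B ψ ψ q u v) Γ)
    (hΓeta : IsLeviCivita (fun q u v => derivForm B η ψ q u v) Γeta)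
    (hL : ∀ p u v, L p u v = Γeta p u v - Γ p u v) :
    2 * gaussCurvature (derivForm B η ψ) p * (chartGram (derivForm B η ψ p)).det =
      chartTrace (A p) ^ 2 * (chartGram (derivForm B ψ ψ p)).det
        - kulkarniNomizu (derivForm B η ψ p · ·) (L p) (L p) := by
  have hΓL : ∀ u v, L p u v = L p v u := fun u v => by rw [hL, hL, hΓ.1 p u v, hΓeta.1 p u v]
  have hpolar : kulkarniNomizu (derivForm B η ψ p · ·) (fun u v => Γeta p u v + L p u v)
      (fun u v => Γeta p u v - L p u v) =
        kulkarniNomizu (derivForm B η ψ p · ·) (Γeta p) (Γeta p)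
          - kulkarniNomizu (derivForm B η ψ p · ·) (L p) (L p) := by
    simp only [kulkarniNomizu, map_add, map_sub, add_apply, hΓL (bse 1) (bse 0),
      hΓeta.1 p (bse 1) (bse 0), h.derivForm_normal_self_comm p (L p _ _) (Γeta p _ _)]
    ring
  have hKN : kulkarniNomizu (B · ·) (fderiv ℝ (fderiv ℝ η) p · ·) (fderiv ℝ (fderiv ℝ ψ) p · ·) =
      kulkarniNomizu (derivForm B η ψ p · ·) (fun u v => Γeta p u v + L p u v)
          (fun u v => Γeta p u v - L p u v)
        + kulkarniNomizu (· * ·) (derivForm B η ψ p · ·) (derivForm B η ψ p · ·)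
        + kulkarniNomizu (· * ·) (derivForm B η η p · ·) (derivForm B ψ ψ p · ·) := by
    simp only [kulkarniNomizu, h.bilin_fderiv_fderiv_normal_fderiv_fderiv_self hdim hΓ hΓeta hL]
    ring
  have hIII : kulkarniNomizu (· * ·) (derivForm B η η p · ·) (derivForm B ψ ψ p · ·) =
      chartTrace (fun u => A p (A p u)) * (chartGram (derivForm B ψ ψ p)).det := by
    simp only [h.derivForm_normal_normal_apply hWein]
    exact kulkarniNomizu_comp_left _ _
  have hcurv := gaussCurvature_mul_det_chartGram (h.derivForm_normal_self_comm p) hΓeta hdet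
  rw [linearizedCurvature_derivForm h.contDiff_normal h.contDiff h.derivForm_normal_self_comm, hKN,
    hpolar, kulkarniNomizu_self, hIII, chartTrace_comp_self,
    det_chartGram_of_apply_eq (derivForm_apply_of_fderiv_eq_neg hWein)] at hcurv
  rw [det_chartGram_of_apply_eq (derivForm_apply_of_fderiv_eq_neg hWein)]
  linarith

theorem fderiv_det_weingarten (h : IsLightconeImmersion B ψ η)
    (hWein : ∀ q v, fderiv ℝ η q v = -fderiv ℝ ψ q (A q v))
    (hΓ : IsLeviCivita (fun q u v => derivForm B ψ ψ q u v) Γ)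
    (hΓeta : IsLeviCivita (fun q u v => derivForm B η ψ q u v) Γeta)
    (hL : ∀ p u v, L p u v = Γeta p u v - Γ p u v) (v : ℝ × ℝ) :
    fderiv ℝ (fun q => LinearMap.det (A q)) p v =
      2 * LinearMap.det (A p) * chartTrace (L p v) := by
  have hdet : ∀ q, LinearMap.det (A q) =
      (chartGram (derivForm B η ψ q)).det / (chartGram (derivForm B ψ ψ q)).det := fun q =>
    eq_div_of_mul_eq (det_chartGram_ne_zero (h.nondegenerate q))
      (det_chartGram_of_apply_eq (derivForm_apply_of_fderiv_eq_neg (hWein q))).symm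
  simp only [hdet]
  rw [fderiv_det_chartGram_div_of_isLeviCivita
    (differentiableAt_derivForm_apply h.contDiff_two h.contDiff_two)
    (differentiableAt_derivForm_apply h.contDiff_two_normal h.contDiff_two) hΓ hΓeta
    (det_chartGram_ne_zero (h.nondegenerate p))]
  simp only [chartTrace, hL, Prod.fst_sub, Prod.snd_sub]
  ring

theorem two_mul_gaussCurvature_derivForm_normal_self (h : IsLightconeImmersion B ψ η)
    (hdim : Module.finrank ℝ V = 4) (hWein : ∀ q v, fderiv ℝ η q v = -fderiv ℝ ψ q (A q v))
    (hII : ∀ u, (∀ v, derivForm B η ψ p u v = 0) → u = 0)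
    (hΓ : IsLeviCivita (fun q u v => derivForm B ψ ψ q u v) Γ)
    (hΓeta : IsLeviCivita (fun q u v => derivForm B η ψ q u v) Γeta)
    (hL : ∀ p u v, L p u v = Γeta p u v - Γ p u v) :
    2 * gaussCurvature (derivForm B η ψ) p =
      gaussCurvature (derivForm B ψ ψ) p ^ 2 / LinearMap.det (A p)
        + (∑ i : Fin 2, ∑ j : Fin 2, ∑ k : Fin 2, ∑ l : Fin 2,
            (chartGram (derivForm B η ψ p))⁻¹ i k * (chartGram (derivForm B η ψ p))⁻¹ j l *
            derivForm B η ψ p (L p (bse i) (bse j)) (L p (bse k) (bse l)))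
        - 1 / (4 * LinearMap.det (A p) ^ 2) * ∑ i : Fin 2, ∑ j : Fin 2,
            (chartGram (derivForm B η ψ p))⁻¹ i j *
            fderiv ℝ (fun q => LinearMap.det (A q)) p (bse i) *
            fderiv ℝ (fun q => LinearMap.det (A q)) p (bse j) := by
  have hdetII := det_chartGram_ne_zero hII
  have hdet := det_chartGram_of_apply_eq (derivForm_apply_of_fderiv_eq_neg (B := B) (hWein p))
  have hA : LinearMap.det (A p) ≠ 0 := left_ne_zero_of_mul (hdet ▸ hdetII)
  have hgrad : ∀ s x y : ℝ, 1 / (4 * LinearMap.det (A p) ^ 2) * (s * (2 * LinearMap.det (A p) * x)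
      * (2 * LinearMap.det (A p) * y)) = s * x * y := fun s x y => by
    field_simp
    ring
  have hcurv : 2 * gaussCurvature (derivForm B η ψ) p =
      chartTrace (A p) ^ 2 / LinearMap.det (A p)
        - kulkarniNomizu (derivForm B η ψ p · ·) (L p) (L p)
          / (chartGram (derivForm B η ψ p)).det := by
    apply mul_right_cancel₀ hdetII
    rw [h.gaussCurvature_derivForm_normal_self hdim (hWein p) hdetII hΓ hΓeta hL, sub_mul,
      div_mul_cancel₀ _ hdetII, hdet, ← mul_assoc, div_mul_cancel₀ _ hA]
  rw [sum_inv_chartGram_mul_bilin (h.derivForm_normal_self_comm p) hdetII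
      (fun u v => by rw [hL, hL, hΓ.1 p u v, hΓeta.1 p u v])
      (h.derivForm_difference_comm hdim hΓ hΓeta hL),
    h.gaussCurvature_derivForm_self hdim (hWein p) hΓ, neg_sq, hcurv]
  simp only [h.fderiv_det_weingarten hWein hΓ hΓeta hL, Finset.mul_sum, hgrad]
  ring

end IsLightconeImmersion

theorem stmt18_general (h : IsLightconeImmersion B ψ η) (hdim : Module.finrank ℝ V = 4)
    (hWein : ∀ p v, fderiv ℝ η p v = -fderiv ℝ ψ p (A p v))
    {g II : ℝ × ℝ → ℝ × ℝ → ℝ × ℝ → ℝ}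
    (hg : ∀ p u v, g p u v = B (fderiv ℝ ψ p u) (fderiv ℝ ψ p v))
    (hII : ∀ p u v, II p u v = -g p (A p u) v)
    (hIInondeg : ∀ p u, (∀ v, II p u v = 0) → u = 0)
    (hΓ : IsLeviCivita g Γ) (hΓeta : IsLeviCivita II Γeta)
    (hL : ∀ p u v, L p u v = Γeta p u v - Γ p u v)
    {d : ℝ × ℝ → ℝ} (hd : ∀ p, d p = LinearMap.det (A p)) {K Keta : ℝ × ℝ → ℝ}
    (hK : ∀ p, K p = brioschi (fun q => g q (bse 0) (bse 0))
      (fun q => g q (bse 0) (bse 1)) (fun q => g q (bse 1) (bse 1)) p)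
    (hKeta : ∀ p, Keta p = brioschi (fun q => II q (bse 0) (bse 0))
      (fun q => II q (bse 0) (bse 1)) (fun q => II q (bse 1) (bse 1)) p) (p : ℝ × ℝ) :
    2 * Keta p = K p ^ 2 / d p
      + (∑ i : Fin 2, ∑ j : Fin 2, ∑ k : Fin 2, ∑ l : Fin 2,
          (Matrix.of fun a b => II p (bse a) (bse b))⁻¹ i k *
          (Matrix.of fun a b => II p (bse a) (bse b))⁻¹ j l *
          II p (L p (bse i) (bse j)) (L p (bse k) (bse l)))
      - 1 / (4 * d p ^ 2) * ∑ i : Fin 2, ∑ j : Fin 2,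
          (Matrix.of fun a b => II p (bse a) (bse b))⁻¹ i j *
          fderiv ℝ d p (bse i) * fderiv ℝ d p (bse j) := by
  obtain rfl : g = fun q u v => derivForm B ψ ψ q u v := by
    funext q u v
    exact hg q u v
  obtain rfl : II = fun q u v => derivForm B η ψ q u v := by
    funext q u v
    rw [hII, derivForm_apply_of_fderiv_eq_neg (hWein q)]
  obtain rfl : d = fun q => LinearMap.det (A q) := funext hd
  rw [hK, hKeta]
  exact h.two_mul_gaussCurvature_derivForm_normal_self hdim hWein (hIInondeg p) hΓ hΓeta hL

end LightconeSurface

/-- The Lorentz–Minkowski inner product as a continuous bilinear form. -/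
noncomputable def minkForm : (Fin 4 → ℝ) →L[ℝ] (Fin 4 → ℝ) →L[ℝ] ℝ :=
  LinearMap.toContinuousBilinearMap (LinearMap.mk₂ ℝ mink
    (fun u u' v => by simp only [mink, Pi.add_apply]; ring)
    (fun c u v => by simp only [mink, Pi.smul_apply, smul_eq_mul]; ring)
    (fun u v v' => by simp only [mink, Pi.add_apply]; ring)
    (fun c u v => by simp only [mink, Pi.smul_apply, smul_eq_mul]; ring))

theorem mink_comm (u v : Fin 4 → ℝ) : mink u v = mink v u := by
  simp only [mink, mul_comm]

theorem eq_zero_of_forall_eq_zero_of_pos {α : Type*} [Zero α] {b : α → α → ℝ}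
    (hb : ∀ v, v ≠ 0 → 0 < b v v) (u : α) (hu : ∀ v, b u v = 0) : u = 0 := by
  by_contra hne
  exact (hb u hne).ne' (hu u)

theorem isLightconeImmersion_minkForm {ψ η : ℝ × ℝ → Fin 4 → ℝ} (hψ : ContDiff ℝ 3 ψ)
    (hη : ContDiff ℝ 3 η) (hcone : ∀ p, mink (ψ p) (ψ p) = 0)
    (hspace : ∀ p v, v ≠ 0 → 0 < mink (fderiv ℝ ψ p v) (fderiv ℝ ψ p v))
    (hηlight : ∀ p, mink (η p) (η p) = 0) (hψη : ∀ p, mink (ψ p) (η p) = 1)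
    (hηnormal : ∀ p v, mink (η p) (fderiv ℝ ψ p v) = 0) :
    IsLightconeImmersion minkForm ψ η :=
  ⟨mink_comm, hψ, hη, hcone, hηlight, hψη, hηnormal,
    fun p => eq_zero_of_forall_eq_zero_of_pos (hspace p)⟩

/-- Theorem 3.1 of the paper: for a spacelike immersion `ψ` through the
lightcone with `II_η` Riemannian, `K` and `K^η` the Gauss curvatures of the induced metric
and of `II_η`, `d = det A_η`, and `L` the difference tensor of the Levi-Civita connections,
one has `2K^η = K²/d + II_η(L,L) − (1/(4d²))·II_η(∇^{II_η}d, ∇^{II_η}d)`, where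
`II_η(L,L)` is the full `II_η`-square norm of `L` and the last term is the `II_η`-square
norm of the `II_η`-gradient of `d` (both written in the chart via the inverse matrix of
`II_η`). -/
theorem stmt18
    (ψ η : ℝ × ℝ → Fin 4 → ℝ)
    (A : ℝ × ℝ → (ℝ × ℝ →ₗ[ℝ] ℝ × ℝ))
    (hψ : ContDiff ℝ (⊤ : ℕ∞) ψ) (hη : ContDiff ℝ (⊤ : ℕ∞) η)
    (hcone : ∀ p, mink (ψ p) (ψ p) = 0 ∧ 0 < ψ p 0)
    (hspace : ∀ p v, v ≠ 0 → 0 < mink (fderiv ℝ ψ p v) (fderiv ℝ ψ p v))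
    (hηlight : ∀ p, mink (η p) (η p) = 0)
    (hψη : ∀ p, mink (ψ p) (η p) = 1)
    (hηnormal : ∀ p v, mink (η p) (fderiv ℝ ψ p v) = 0)
    (hWein : ∀ p v, fderiv ℝ η p v = -(fderiv ℝ ψ p (A p v)))
    (g II : ℝ × ℝ → (ℝ × ℝ) → (ℝ × ℝ) → ℝ)
    (hg : ∀ p u v, g p u v = mink (fderiv ℝ ψ p u) (fderiv ℝ ψ p v))
    (hII : ∀ p u v, II p u v = -(g p (A p u) v))
    (hIIpos : ∀ p v, v ≠ 0 → 0 < II p v v)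
    (Γ Γeta : ℝ × ℝ → (ℝ × ℝ) → (ℝ × ℝ) → ℝ × ℝ)
    (hΓ : IsLeviCivita g Γ) (hΓeta : IsLeviCivita II Γeta)
    (L : ℝ × ℝ → (ℝ × ℝ) → (ℝ × ℝ) → ℝ × ℝ)
    (hL : ∀ p u v, L p u v = Γeta p u v - Γ p u v)
    (d : ℝ × ℝ → ℝ) (hd : ∀ p, d p = LinearMap.det (A p))
    (K Keta : ℝ × ℝ → ℝ)
    (hK : ∀ p, K p = brioschi (fun q => g q (bse 0) (bse 0))
      (fun q => g q (bse 0) (bse 1)) (fun q => g q (bse 1) (bse 1)) p)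
    (hKeta : ∀ p, Keta p = brioschi (fun q => II q (bse 0) (bse 0))
      (fun q => II q (bse 0) (bse 1)) (fun q => II q (bse 1) (bse 1)) p) :
    ∀ p, 2 * Keta p
      = (K p) ^ 2 / d p
        + (∑ i : Fin 2, ∑ j : Fin 2, ∑ k : Fin 2, ∑ l : Fin 2,
            ((Matrix.of fun a b => II p (bse a) (bse b))⁻¹ i k) *
            ((Matrix.of fun a b => II p (bse a) (bse b))⁻¹ j l) *
            II p (L p (bse i) (bse j)) (L p (bse k) (bse l)))
        - (1 / (4 * (d p) ^ 2)) *
          (∑ i : Fin 2, ∑ j : Fin 2,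
            ((Matrix.of fun a b => II p (bse a) (bse b))⁻¹ i j) *
            (fderiv ℝ d p (bse i)) * (fderiv ℝ d p (bse j))) := by
  have himm := isLightconeImmersion_minkForm (contDiff_infty.1 hψ 3) (contDiff_infty.1 hη 3)
    (fun p => (hcone p).1) hspace hηlight hψη hηnormal
  exact stmt18_general himm (by simp) hWein hg hII
    (fun p => eq_zero_of_forall_eq_zero_of_pos (hIIpos p)) hΓ hΓeta hL hd hK hKeta
end
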